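/- Let n ≥ 1 and k ≥ 1 be integers. Then the average L^{2n}-norm over the unit sphere of M satisfies ∫_{S_M} ‖f‖_{2n} dμ(f) ≤ √(2n), where ‖f‖_{2n} = (∫_{S^{n-1}} f^{2n} dσ)^{1/(2n)}. -/

import Mathlib

/-!
Identify `M` with `ℝ^D` and let `v_x` represent the functional `f ↦ f(x)` on `M`. Rotations of the
sphere act isometrically on `M`, so `‖v_x‖` is constant for `‖x‖ = 1`; since the mean of `‖v_x‖²`
is the trace of the identity, `‖v_x‖² = D` (`norm_kvec_sq`).

By Fubini, the average of `∫ f ^ (2n) dσ` over the sphere of `M` is the `σ`-mean of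
`∫ ⟪y, v_x⟫ ^ (2n) dμ(y) = D ^ n ∫ y₁ ^ (2n) dμ`. The moments of a coordinate satisfy
`(D + 2m) ∫ y₁ ^ (2m+2) = (2m+1) ∫ y₁ ^ (2m)` (`moment_rec`), a consequence of rotation invariance
and `∑ yᵢ² = 1`. Hence the average is at most `(2n) ^ n` (`average_pow_le`), and concavity of
`t ↦ t ^ (1/(2n))` (Jensen) bounds the average of the norm by `√(2n)`.
-/

open MeasureTheory MvPolynomial
open scoped ENNReal RealInnerProductSpace

noncomputable section

/-- Evaluation of a multivariate polynomial at a point of Euclidean space `ℝⁿ`. -/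
def peval {n : ℕ} (p : MvPolynomial (Fin n) ℝ) (x : EuclideanSpace ℝ (Fin n)) : ℝ :=
  MvPolynomial.eval (fun i => x i) p

/-- The `L²(σ)` inner product `⟨f,g⟩ = ∫ f·g dσ` on polynomials. -/
def pinner {n : ℕ} (σ : Measure (EuclideanSpace ℝ (Fin n)))
    (f g : MvPolynomial (Fin n) ℝ) : ℝ :=
  ∫ x, peval f x * peval g x ∂σ

/-- `μ` is a rotation-invariant probability measure concentrated on the unit sphere. -/
def IsRotInvSphereProb {E : Type*} [NormedAddCommGroup E] [NormedSpace ℝ E]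
    [MeasurableSpace E] (μ : Measure E) : Prop :=
  IsProbabilityMeasure μ ∧ μ (Metric.sphere (0 : E) 1)ᶜ = 0 ∧
    ∀ T : E ≃ₗᵢ[ℝ] E, Measure.map T μ = μ

/-- The hyperplane `M` of forms of degree `2k` with integral `0` on the sphere. -/
def Mset (n k : ℕ) (σ : Measure (EuclideanSpace ℝ (Fin n))) :
    Set (MvPolynomial (Fin n) ℝ) :=
  {f | f.IsHomogeneous (2 * k) ∧ ∫ x, peval f x ∂σ = 0}

/-- The form `r^{2k} = (x₁² + ⋯ + xₙ²)^k`. -/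
def rSq (n k : ℕ) : MvPolynomial (Fin n) ℝ :=
  (∑ i : Fin n, X i ^ 2) ^ k

/-- The cone `C` of nonnegative forms of degree `2k`. -/
def Cset (n k : ℕ) : Set (MvPolynomial (Fin n) ℝ) :=
  {f | f.IsHomogeneous (2 * k) ∧ ∀ x : EuclideanSpace ℝ (Fin n), 0 ≤ peval f x}

/-- The cone `Sq` of sums of squares of forms of degree `k`. -/
def Sqset (n k : ℕ) : Set (MvPolynomial (Fin n) ℝ) :=
  {f | ∃ (m : ℕ) (g : Fin m → MvPolynomial (Fin n) ℝ),
    (∀ i, (g i).IsHomogeneous k) ∧ f = ∑ i, g i ^ 2}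

/-- The compact base `C̃ = {f ∈ M : f + r^{2k} ∈ C}`. -/
def Ctilde (n k : ℕ) (σ : Measure (EuclideanSpace ℝ (Fin n))) :
    Set (MvPolynomial (Fin n) ℝ) :=
  {f ∈ Mset n k σ | f + rSq n k ∈ Cset n k}

/-- The compact base `S̃q = {f ∈ M : f + r^{2k} ∈ Sq}`. -/
def Sqtilde (n k : ℕ) (σ : Measure (EuclideanSpace ℝ (Fin n))) :
    Set (MvPolynomial (Fin n) ℝ) :=
  {f ∈ Mset n k σ | f + rSq n k ∈ Sqset n k}

/-- `φ` is a linear isometry (w.r.t. the `L²(σ)` inner product) identifying Euclidean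
`D`-space with the hyperplane `M`; in particular `D = D_M = dim M`. -/
def IsCoordOfM (n k D : ℕ) (σ : Measure (EuclideanSpace ℝ (Fin n)))
    (φ : EuclideanSpace ℝ (Fin D) →ₗ[ℝ] MvPolynomial (Fin n) ℝ) : Prop :=
  Function.Injective φ ∧ Set.range φ = Mset n k σ ∧
    ∀ y z : EuclideanSpace ℝ (Fin D), pinner σ (φ y) (φ z) = ⟪y, z⟫

/-- The `L^∞` norm of a polynomial on the unit sphere `S^{n-1}`. -/
def supNorm {n : ℕ} (f : MvPolynomial (Fin n) ℝ) : ℝ :=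
  sSup ((fun x => |peval f x|) '' Metric.sphere (0 : EuclideanSpace ℝ (Fin n)) 1)

/-- The norm `‖f‖_sq = max {|⟨f, g²⟩| : g ∈ P_{n,k}, ⟨g,g⟩ = 1}`. -/
def sqNorm {n : ℕ} (k : ℕ) (σ : Measure (EuclideanSpace ℝ (Fin n)))
    (f : MvPolynomial (Fin n) ℝ) : ℝ :=
  sSup ((fun g => |pinner σ f (g ^ 2)|) ''
    {g : MvPolynomial (Fin n) ℝ | g.IsHomogeneous k ∧ pinner σ g g = 1})

/-! ### Rotation-invariant measures on the sphere and their even moments -/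

theorem sph_ae {E : Type*} [NormedAddCommGroup E] [NormedSpace ℝ E]
    [MeasurableSpace E] {μ : Measure E} (h : IsRotInvSphereProb μ) : ∀ᵐ y ∂μ, ‖y‖ = 1 := by
  have := h.2.1
  rw [← mem_ae_iff] at this
  filter_upwards [this] with y hy
  simpa using hy

theorem sph_integrable {E : Type*} [NormedAddCommGroup E] [NormedSpace ℝ E] [ProperSpace E]
    [MeasurableSpace E] [BorelSpace E] {μ : Measure E} (h : IsRotInvSphereProb μ)
    {f : E → ℝ} (hf : Continuous f) : Integrable f μ := by
  have := h.1
  obtain ⟨C, hC⟩ := (isCompact_sphere (0 : E) 1).exists_bound_of_continuousOn hf.continuousOn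
  have : SecondCountableTopology E := inferInstance
  refine Integrable.of_bound hf.aestronglyMeasurable C ?_
  filter_upwards [sph_ae h] with y hy
  exact hC y (by simpa using hy)

theorem sph_integral_comp {E : Type*} [NormedAddCommGroup E] [NormedSpace ℝ E]
    [MeasurableSpace E] [BorelSpace E] {μ : Measure E} (h : IsRotInvSphereProb μ)
    (T : E ≃ₗᵢ[ℝ] E) (f : E → ℝ) : ∫ y, f (T y) ∂μ = ∫ y, f y ∂μ := by
  conv_rhs => rw [← h.2.2 T]
  exact (integral_map_equiv T.toHomeomorph.toMeasurableEquiv f).symm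

theorem exists_isometry {E : Type*} [NormedAddCommGroup E] [InnerProductSpace ℝ E]
    [CompleteSpace E] {v w : E} (h : ‖v‖ = ‖w‖) : ∃ T : E ≃ₗᵢ[ℝ] E, T v = w := by
  exact ⟨_, Submodule.reflection_sub h⟩

/-- The even moment `∫ ⟪y, v⟫ ^ (2m) dμ` depends on `v` only through `‖v‖`. -/
theorem moment_eq {D : ℕ} {μ : Measure (EuclideanSpace ℝ (Fin D))} (h : IsRotInvSphereProb μ)
    (m : ℕ) (u v : EuclideanSpace ℝ (Fin D)) (hu : ‖u‖ = 1) :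
    ∫ y, ⟪y, v⟫ ^ (2 * m) ∂μ = ‖v‖ ^ (2 * m) * ∫ y, ⟪y, u⟫ ^ (2 * m) ∂μ := by
  obtain ⟨T, hT⟩ := exists_isometry (v := ‖v‖ • u) (w := v) (by simp [norm_smul, hu])
  rw [← sph_integral_comp h T, ← integral_const_mul]
  congr 1 with y
  conv_lhs => rw [← hT]
  rw [T.inner_map_map, inner_smul_right, mul_pow]

/-- For orthonormal `u, w`, invariance makes `∫ ⟪y, u + t w⟫ ^ (2m+2) dμ` equal to
`c (1 + t²) ^ (m+1)`; this lemma compares the coefficients of `t²`. -/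
theorem mixed_moment {D : ℕ} {μ : Measure (EuclideanSpace ℝ (Fin D))} (h : IsRotInvSphereProb μ)
    (m : ℕ) (u w : EuclideanSpace ℝ (Fin D)) (hu : ‖u‖ = 1) (hw : ‖w‖ = 1) (huw : ⟪u, w⟫ = 0) :
    (2 * m + 1) * ∫ y, ⟪y, u⟫ ^ (2 * m) * ⟪y, w⟫ ^ 2 ∂μ = ∫ y, ⟪y, u⟫ ^ (2 * (m + 1)) ∂μ := by
  set c := ∫ y, ⟪y, u⟫ ^ (2 * (m + 1)) ∂μ with hc
  let a : ℕ → ℝ := fun i => ∫ y, ⟪y, w⟫ ^ i * ⟪y, u⟫ ^ (2 * (m + 1) - i) ∂μ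
  let p : Polynomial ℝ := ∑ i ∈ Finset.range (2 * (m + 1) + 1),
    Polynomial.C (a i * ((2 * (m + 1)).choose i : ℝ)) * Polynomial.X ^ i
  have hp : p = Polynomial.C c * (Polynomial.X ^ 2 + 1) ^ (m + 1) := by
    apply Polynomial.funext
    intro t
    have hn : ‖t • w + u‖ ^ 2 = t ^ 2 + 1 := by
      rw [norm_add_sq_real, inner_smul_left, real_inner_comm, huw, norm_smul, hw, hu]
      simp
    have h1 := moment_eq h (m + 1) u (t • w + u) hu
    rw [← hc, pow_mul ‖_‖, hn] at h1
    simp only [p, Polynomial.eval_finsetSum, Polynomial.eval_mul, Polynomial.eval_C,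
      Polynomial.eval_pow, Polynomial.eval_X, Polynomial.eval_add, Polynomial.eval_one]
    rw [mul_comm c, ← h1]
    simp_rw [inner_add_right, inner_smul_right, add_pow]
    rw [integral_finsetSum]
    · refine Finset.sum_congr rfl fun i _ => ?_
      simp only [a]
      rw [← integral_mul_const, ← integral_mul_const]
      congr 1 with y
      ring
    · intro i _
      exact sph_integrable h (by fun_prop)
  -- Both sides of `h2` carry the factor `m + 1`, from `(2m+2).choose 2 = (m+1)(2m+1)`.
  have h2 := congrArg (fun q => Polynomial.coeff q 2) hp
  have h3 : ((Polynomial.X ^ 2 + 1 : Polynomial ℝ) ^ (m + 1)).coeff 2 = m + 1 := by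
    have : (Polynomial.X ^ 2 + 1 : Polynomial ℝ) ^ (m + 1)
        = Polynomial.expand ℝ 2 ((Polynomial.X + 1) ^ (m + 1)) := by simp
    rw [this, show 2 = 1 * 2 from rfl, Polynomial.coeff_expand_mul (by norm_num),
      Polynomial.coeff_X_add_one_pow]
    simp
  simp only [p, Polynomial.coeff_C_mul, h3, Polynomial.finsetSum_coeff,
    Polynomial.coeff_X_pow] at h2
  rw [Finset.sum_eq_single 2 (by intro b _ hb; simp [hb.symm])
    (by intro hb; simp at hb)] at h2
  have ha : a 2 = ∫ y, ⟪y, u⟫ ^ (2 * m) * ⟪y, w⟫ ^ 2 ∂μ := by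
    simp only [a]
    congr 1 with y
    rw [mul_comm, show 2 * (m + 1) - 2 = 2 * m by omega]
  rw [Nat.cast_choose_two, ha] at h2
  push_cast at h2
  have hm : (m + 1 : ℝ) ≠ 0 := by positivity
  apply mul_left_cancel₀ hm
  simp at h2
  linarith

/-- Obtained by integrating `y j ^ (2m) = ∑ i, y j ^ (2m) * y i ^ 2` over the unit sphere. -/
theorem moment_rec {D : ℕ} {μ : Measure (EuclideanSpace ℝ (Fin D))} (h : IsRotInvSphereProb μ)
    (m : ℕ) (j : Fin D) :
    (2 * m + 1) * ∫ y, y j ^ (2 * m) ∂μ = (D + 2 * m) * ∫ y, y j ^ (2 * (m + 1)) ∂μ := by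
  have h1 : ∫ y, y j ^ (2 * m) ∂μ = ∑ i, ∫ y, y j ^ (2 * m) * y i ^ 2 ∂μ := by
    rw [← integral_finsetSum _ fun i _ => sph_integrable h (by fun_prop)]
    apply integral_congr_ae
    filter_upwards [sph_ae h] with y hy
    rw [← Finset.mul_sum, ← EuclideanSpace.real_norm_sq_eq, hy]
    simp
  have h2 : ∀ i ∈ Finset.univ.erase j, (2 * m + 1) * ∫ y, y j ^ (2 * m) * y i ^ 2 ∂μ
      = ∫ y, y j ^ (2 * (m + 1)) ∂μ := by
    intro i hi
    have hij : i ≠ j := Finset.ne_of_mem_erase hi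
    have := mixed_moment h m (EuclideanSpace.single j 1) (EuclideanSpace.single i 1)
      (by simp) (by simp) (by simp [EuclideanSpace.inner_single_left, hij.symm])
    simpa [EuclideanSpace.inner_single_right] using this
  have hD : 1 ≤ D := j.pos
  rw [h1, Finset.mul_sum, ← Finset.add_sum_erase _ _ (Finset.mem_univ j), Finset.sum_congr rfl h2,
    Finset.sum_const, Finset.card_erase_of_mem (Finset.mem_univ j)]
  have h3 : ∫ y, y j ^ (2 * m) * y j ^ 2 ∂μ = ∫ y, y j ^ (2 * (m + 1)) ∂μ := by
    congr 1 with y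
    ring
  rw [h3]
  simp [Nat.cast_sub hD]
  ring

/-- The exact value of the left side is `D ^ m (2m-1)!! / (D (D+2) ⋯ (D+2m-2))`; each factor of
`moment_rec` is bounded crudely by `2m + 1 ≤ 2n` and `D ≤ D + 2m`. -/
theorem moment_le {D : ℕ} {μ : Measure (EuclideanSpace ℝ (Fin D))} (h : IsRotInvSphereProb μ)
    (j : Fin D) (n m : ℕ) (hm : m ≤ n) :
    (D : ℝ) ^ m * ∫ y, y j ^ (2 * m) ∂μ ≤ (2 * n) ^ m := by
  have := h.1
  induction m with
  | zero => simp
  | succ m ih =>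
    have h1 := moment_rec h m j
    have h0 : 0 ≤ ∫ y, y j ^ (2 * (m + 1)) ∂μ :=
      integral_nonneg fun y => (even_two_mul _).pow_nonneg _
    have h0' : 0 ≤ ∫ y, y j ^ (2 * m) ∂μ :=
      integral_nonneg fun y => (even_two_mul _).pow_nonneg _
    have h2 : D * ∫ y, y j ^ (2 * (m + 1)) ∂μ ≤ (2 * n) * ∫ y, y j ^ (2 * m) ∂μ := by
      have : (m : ℝ) + 1 ≤ n := by exact_mod_cast hm
      nlinarith
    calc (D : ℝ) ^ (m + 1) * ∫ y, y j ^ (2 * (m + 1)) ∂μ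
        = D ^ m * (D * ∫ y, y j ^ (2 * (m + 1)) ∂μ) := by ring
      _ ≤ D ^ m * ((2 * n) * ∫ y, y j ^ (2 * m) ∂μ) := by gcongr
      _ = (2 * n) * (D ^ m * ∫ y, y j ^ (2 * m) ∂μ) := by ring
      _ ≤ (2 * n) * (2 * n) ^ m := by gcongr; exact ih (by omega)
      _ = _ := by ring

/-! ### Evaluation functionals on `M` -/

theorem continuous_peval {n : ℕ} (p : MvPolynomial (Fin n) ℝ) : Continuous (peval p) :=
  (MvPolynomial.continuous_eval p).comp (by fun_prop)

/-- The polynomial `x ↦ p (T x)`, for `T` a linear isometry. -/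
def protate {n : ℕ} (T : EuclideanSpace ℝ (Fin n) ≃ₗᵢ[ℝ] EuclideanSpace ℝ (Fin n))
    (p : MvPolynomial (Fin n) ℝ) : MvPolynomial (Fin n) ℝ :=
  aeval (fun i => ∑ j, C (T (EuclideanSpace.single j 1) i) * X j) p

theorem peval_protate {n : ℕ} (T : EuclideanSpace ℝ (Fin n) ≃ₗᵢ[ℝ] EuclideanSpace ℝ (Fin n))
    (p : MvPolynomial (Fin n) ℝ) (x : EuclideanSpace ℝ (Fin n)) :
    peval (protate T p) x = peval p (T x) := by
  unfold peval protate
  rw [aeval_def, ← eval₂_id, algebraMap_eq]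
  change eval₂Hom _ _ (eval₂ C _ p) = _
  rw [MvPolynomial.hom_eval₂]
  simp only [MvPolynomial.eval]
  have hT : T x = ∑ j, x j • T (EuclideanSpace.single j 1) := by
    conv_lhs => rw [← (EuclideanSpace.basisFun (Fin n) ℝ).sum_repr x]
    simp
  rw [coe_eval₂Hom]
  congr 1
  · ext; simp
  · ext i
    rw [hT]
    simp [mul_comm]

theorem protate_homogeneous {n d : ℕ}
    (T : EuclideanSpace ℝ (Fin n) ≃ₗᵢ[ℝ] EuclideanSpace ℝ (Fin n))
    {p : MvPolynomial (Fin n) ℝ} (hp : p.IsHomogeneous d) : (protate T p).IsHomogeneous d := by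
  have := hp.aeval (S := ℝ) (n := 1) (fun i => ∑ j, C (T (EuclideanSpace.single j 1) i) * X j)
    (fun i => IsHomogeneous.sum _ _ _ fun j _ => isHomogeneous_C_mul_X _ _)
  simpa [protate] using this

/-- The vector representing evaluation at `x` as a functional on `M ≅ ℝ^D`
(the reproducing kernel at `x`). -/
def kvec {n D : ℕ} (φ : EuclideanSpace ℝ (Fin D) →ₗ[ℝ] MvPolynomial (Fin n) ℝ)
    (x : EuclideanSpace ℝ (Fin n)) : EuclideanSpace ℝ (Fin D) :=
  WithLp.toLp 2 fun i => peval (φ (EuclideanSpace.single i 1)) x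

theorem inner_kvec {n D : ℕ} (φ : EuclideanSpace ℝ (Fin D) →ₗ[ℝ] MvPolynomial (Fin n) ℝ)
    (y : EuclideanSpace ℝ (Fin D)) (x : EuclideanSpace ℝ (Fin n)) :
    ⟪y, kvec φ x⟫ = peval (φ y) x := by
  conv_rhs => rw [← (EuclideanSpace.basisFun (Fin D) ℝ).sum_repr y]
  simp [peval, kvec, PiLp.inner_apply, mul_comm, smul_eval]

theorem continuous_kvec {n D : ℕ}
    (φ : EuclideanSpace ℝ (Fin D) →ₗ[ℝ] MvPolynomial (Fin n) ℝ) : Continuous (kvec φ) := by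
  unfold kvec
  have := fun i => continuous_peval (φ (EuclideanSpace.single i 1))
  fun_prop

/-- If `T x = x'` and `f` represents evaluation at `x'`, then `f ∘ T ∈ M` has the same norm as `f`
and takes the value `‖f‖²` at `x`, so Cauchy–Schwarz gives the bound. -/
theorem norm_kvec_le {n k D : ℕ} {σ : Measure (EuclideanSpace ℝ (Fin n))}
    (hσ : IsRotInvSphereProb σ)
    {φ : EuclideanSpace ℝ (Fin D) →ₗ[ℝ] MvPolynomial (Fin n) ℝ}
    (hφ : IsCoordOfM n k D σ φ) {x x' : EuclideanSpace ℝ (Fin n)} (h : ‖x‖ = ‖x'‖) :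
    ‖kvec φ x'‖ ≤ ‖kvec φ x‖ := by
  obtain ⟨T, rfl⟩ := exists_isometry h
  set v := kvec φ (T x) with hv
  have hM : φ v ∈ Mset n k σ := hφ.2.1 ▸ Set.mem_range_self v
  have hM' : protate T (φ v) ∈ Mset n k σ := by
    refine ⟨protate_homogeneous T hM.1, ?_⟩
    simp_rw [peval_protate]
    rw [sph_integral_comp hσ T]
    exact hM.2
  rw [← hφ.2.1] at hM'
  obtain ⟨z, hz⟩ := hM'
  have hzv : ‖z‖ = ‖v‖ := by
    have h1 : ⟪z, z⟫ = ⟪v, v⟫ := by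
      rw [← hφ.2.2, ← hφ.2.2, hz]
      unfold pinner
      simp_rw [peval_protate]
      exact sph_integral_comp hσ T fun x => peval (φ v) x * peval (φ v) x
    rw [real_inner_self_eq_norm_sq, real_inner_self_eq_norm_sq] at h1
    exact (sq_eq_sq₀ (norm_nonneg _) (norm_nonneg _)).1 h1
  have h2 : ‖v‖ * ‖v‖ ≤ ‖v‖ * ‖kvec φ x‖ := by
    calc ‖v‖ * ‖v‖ = ⟪v, v⟫ := (real_inner_self_eq_norm_mul_norm v).symm
      _ = ⟪z, kvec φ x⟫ := by
        conv_lhs => rw [hv, inner_kvec, ← hv, ← peval_protate, ← hz]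
        rw [inner_kvec]
      _ ≤ ‖z‖ * ‖kvec φ x‖ := real_inner_le_norm _ _
      _ = _ := by rw [hzv]
  rcases (norm_nonneg v).eq_or_lt with h0 | h0
  · rw [← h0]; exact norm_nonneg _
  · exact le_of_mul_le_mul_left h2 h0

/-- On the unit sphere the reproducing kernel has constant diagonal `dim M`: it is constant by
rotation invariance, and its mean is the trace of the identity of `M`. -/
theorem norm_kvec_sq {n k D : ℕ} {σ : Measure (EuclideanSpace ℝ (Fin n))}
    (hσ : IsRotInvSphereProb σ)
    {φ : EuclideanSpace ℝ (Fin D) →ₗ[ℝ] MvPolynomial (Fin n) ℝ}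
    (hφ : IsCoordOfM n k D σ φ) {x : EuclideanSpace ℝ (Fin n)} (hx : ‖x‖ = 1) :
    ‖kvec φ x‖ ^ 2 = D := by
  have := hσ.1
  have h1 : ∫ z, ‖kvec φ z‖ ^ 2 ∂σ = ‖kvec φ x‖ ^ 2 := by
    rw [integral_congr_ae (g := fun _ => ‖kvec φ x‖ ^ 2)]
    · simp
    · filter_upwards [sph_ae hσ] with z hz
      have := (norm_kvec_le hσ hφ (hx.trans hz.symm)).antisymm
        (norm_kvec_le hσ hφ (hz.trans hx.symm))
      simp only [this]
  rw [← h1]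
  simp_rw [EuclideanSpace.real_norm_sq_eq]
  rw [integral_finsetSum _ fun i _ => sph_integrable hσ
    (f := fun z => kvec φ z i ^ 2)
    ((continuous_peval (φ (EuclideanSpace.single i 1))).pow 2)]
  have h2 : ∀ i, ∫ z, kvec φ z i ^ 2 ∂σ = 1 := by
    intro i
    have := hφ.2.2 (EuclideanSpace.single i 1) (EuclideanSpace.single i 1)
    simpa [pinner, kvec, sq] using this
  simp [h2]

/-! ### Averaging over the sphere of `M` -/

theorem integrable_peval_pow {n D : ℕ} {σ : Measure (EuclideanSpace ℝ (Fin n))}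
    (hσ : IsRotInvSphereProb σ)
    (φ : EuclideanSpace ℝ (Fin D) →ₗ[ℝ] MvPolynomial (Fin n) ℝ)
    {μ : Measure (EuclideanSpace ℝ (Fin D))} (hμ : IsRotInvSphereProb μ) (m : ℕ) :
    Integrable (fun p : EuclideanSpace ℝ (Fin D) × EuclideanSpace ℝ (Fin n) =>
      peval (φ p.1) p.2 ^ m) (μ.prod σ) := by
  have := hσ.1
  have := hμ.1
  have hk := continuous_kvec φ
  have hc : Continuous fun p : EuclideanSpace ℝ (Fin D) × EuclideanSpace ℝ (Fin n) =>
      ⟪p.1, kvec φ p.2⟫ ^ m := by fun_prop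
  simp_rw [inner_kvec] at hc
  obtain ⟨B, hB⟩ := ((isCompact_sphere (0 : EuclideanSpace ℝ (Fin D)) 1).prod
    (isCompact_sphere (0 : EuclideanSpace ℝ (Fin n)) 1)).exists_bound_of_continuousOn
    hc.continuousOn
  refine Integrable.of_bound hc.aestronglyMeasurable B ?_
  filter_upwards [Measure.quasiMeasurePreserving_fst.ae (sph_ae hμ),
    Measure.quasiMeasurePreserving_snd.ae (sph_ae hσ)] with p h1 h2
  exact hB p ⟨by simpa using h1, by simpa using h2⟩

/-- After exchanging the integrals, the inner one is the `2n`-th moment of `μ` in the direction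
`kvec φ x`, whose norm is `√D`. -/
theorem average_pow_le {n k D : ℕ} {σ : Measure (EuclideanSpace ℝ (Fin n))}
    (hσ : IsRotInvSphereProb σ)
    {φ : EuclideanSpace ℝ (Fin D) →ₗ[ℝ] MvPolynomial (Fin n) ℝ}
    (hφ : IsCoordOfM n k D σ φ)
    {μ : Measure (EuclideanSpace ℝ (Fin D))} (hμ : IsRotInvSphereProb μ) :
    ∫ y, ∫ x, peval (φ y) x ^ (2 * n) ∂σ ∂μ ≤ (2 * n) ^ n := by
  have := hσ.1
  have := hμ.1
  -- `D = 0` is impossible: the unit sphere of `ℝ⁰` is empty and carries no probability measure.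
  obtain ⟨y, hy⟩ := (sph_ae hμ).exists
  have hj : Nonempty (Fin D) := by
    by_contra hcon
    have : IsEmpty (Fin D) := not_nonempty_iff.1 hcon
    rw [Subsingleton.elim y 0] at hy
    simp at hy
  obtain ⟨j⟩ := hj
  rw [integral_integral_swap (integrable_peval_pow hσ φ hμ (2 * n))]
  have h1 : ∀ᵐ x ∂σ, ∫ y, peval (φ y) x ^ (2 * n) ∂μ
      = (D : ℝ) ^ n * ∫ y, y j ^ (2 * n) ∂μ := by
    filter_upwards [sph_ae hσ] with x hx
    have := moment_eq hμ n (EuclideanSpace.single j 1) (kvec φ x) (by simp)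
    rw [pow_mul ‖_‖, norm_kvec_sq hσ hφ hx] at this
    simpa [inner_kvec, EuclideanSpace.inner_single_right] using this
  rw [integral_congr_ae h1]
  simpa using moment_le hμ j n n le_rfl

/-- The average L^{2n} norm over the unit sphere of M is at most √(2n). -/
theorem average_L2n_norm_bound
    (n k D : ℕ) (hn : 1 ≤ n) (hk : 1 ≤ k)
    (σ : Measure (EuclideanSpace ℝ (Fin n))) (hσ : IsRotInvSphereProb σ)
    (φ : EuclideanSpace ℝ (Fin D) →ₗ[ℝ] MvPolynomial (Fin n) ℝ)
    (hφ : IsCoordOfM n k D σ φ)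
    (μ : Measure (EuclideanSpace ℝ (Fin D))) (hμ : IsRotInvSphereProb μ) :
    ∫ y, (∫ x, peval (φ y) x ^ (2 * n) ∂σ) ^ (1 / (2 * (n : ℝ))) ∂μ ≤
      Real.sqrt (2 * (n : ℝ)) := by
  have := hμ.1
  set g : EuclideanSpace ℝ (Fin D) → ℝ := fun y => ∫ x, peval (φ y) x ^ (2 * n) ∂σ with hg
  have hn0 : (0 : ℝ) < n := by exact_mod_cast hn
  have hn1 : (1 : ℝ) ≤ n := by exact_mod_cast hn
  set B : ℝ := (2 * (n : ℝ)) ^ n with hB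
  have hB0 : 0 < B := by positivity
  set a : ℝ := 1 / (2 * (n : ℝ)) with ha
  have ha0 : 0 ≤ a := by positivity
  have ha1 : a ≤ 1 := by rw [ha, div_le_one (by positivity)]; linarith
  have hg0 : ∀ y, 0 ≤ g y := fun y => integral_nonneg fun x => (even_two_mul n).pow_nonneg _
  have hgi : Integrable g μ := by
    have := hσ.1
    exact (integrable_peval_pow hσ φ hμ (2 * n)).integral_prod_left
  have hBa : B ^ a = Real.sqrt (2 * (n : ℝ)) := by
    rw [hB, ha, Real.sqrt_eq_rpow, ← Real.rpow_natCast, ← Real.rpow_mul (by positivity)]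
    congr 1
    field_simp
  -- The tangent line to the concave function `t ↦ t ^ a` at `t = B`.
  have hpt : ∀ y, g y ^ a ≤ B ^ a * (1 + a * (g y / B - 1)) := by
    intro y
    have h1 := rpow_one_add_le_one_add_mul_self (s := g y / B - 1)
      (by linarith [div_nonneg (hg0 y) hB0.le]) ha0 ha1
    rw [add_sub_cancel, Real.div_rpow (hg0 y) hB0.le, div_le_iff₀ (by positivity)] at h1
    linarith
  calc ∫ y, g y ^ a ∂μ ≤ ∫ y, B ^ a * (1 + a * (g y / B - 1)) ∂μ := by
        refine integral_mono_of_nonneg (.of_forall fun y => Real.rpow_nonneg (hg0 y) _) ?_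
          (.of_forall hpt)
        fun_prop
    _ = B ^ a * (1 + a * ((∫ y, g y ∂μ) / B - 1)) := by
        rw [integral_const_mul, integral_add (by fun_prop) (by fun_prop), integral_const_mul,
          integral_sub (by fun_prop) (by fun_prop), integral_div]
        simp
    _ ≤ B ^ a * 1 := by
        have h1 : (∫ y, g y ∂μ) / B ≤ 1 := (div_le_one hB0).2 (average_pow_le hσ hφ hμ)
        have h2 : a * ((∫ y, g y ∂μ) / B - 1) ≤ 0 :=
          mul_nonpos_of_nonneg_of_nonpos ha0 (by linarith)
        gcongr
        linarith
    _ = Real.sqrt (2 * (n : ℝ)) := by rw [mul_one, hBa]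

end
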